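/- Let x₁, …, xₙ be indices with weights ω₁, …, ωₙ ∈ (0,1] summing to 1, and let I₁, I₂, I₃ be families of intuitionistic fuzzy values (α_j^{(1)})_{j=1}^n, (α_j^{(2)})_{j=1}^n, (α_j^{(3)})_{j=1}^n. Define d_Wu(I, I') = Σ_{j=1}^n ω_j · JS(α_j, α'_j). If α_j^{(1)} ⊂ α_j^{(2)} ⊂ α_j^{(3)} in Atanassov's order for every j, and I₁ ≠ I₂ and I₂ ≠ I₃, then d_Wu(I₁, I₂) < d_Wu(I₁, I₃) and d_Wu(I₂, I₃) < d_Wu(I₁, I₃). -/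

import Mathlib

/-!
Up to the factor `log 2`, `L` is the Jensen gap `f p + f q - 2 f ((p + q) / 2)` of the strictly
convex function `f x = x log x`. For any strictly convex `f` this gap strictly increases as `q`
moves away from `p` along a ray: if `q` lies strictly before `r` and `m` is the midpoint of `p` and
`q`, then `q + 2 ((p + r) / 2) = r + 2 m`, and both `q` and `(p + r) / 2` lie between `r` and `m`,
so Jensen's inequality gives `f q + 2 f ((p + r) / 2) < f r + 2 f m`. In an Atanassov chain each
coordinate of the middle value lies between the outer ones, so both inequalities are this one fact,
read from either end of the chain.
-/

/-- `L p q = p·log₂(2p/(p+q)) + q·log₂(2q/(p+q))`, with Lean's conventions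
`0 * log₂ _ = 0` and `x / 0 = 0`, `log₂ 0 = 0` implementing `0·log 0 = 0`
and `0·log(0/0) = 0`. -/
noncomputable def L (p q : ℝ) : ℝ :=
  p * Real.logb 2 (2 * p / (p + q)) + q * Real.logb 2 (2 * q / (p + q))

/-- An intuitionistic fuzzy value: a pair `⟨μ, ν⟩` with `0 ≤ μ`, `0 ≤ ν`,
`μ + ν ≤ 1` (hence also `μ ≤ 1` and `ν ≤ 1`). -/
@[ext]
structure IFV where
  mu : ℝ
  nu : ℝ
  mu_nonneg : 0 ≤ mu
  nu_nonneg : 0 ≤ nu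
  sum_le : mu + nu ≤ 1

/-- `Z(α,β) = L(1−μ_α, 1−μ_β) + L(ν_α, ν_β)`. -/
noncomputable def Z (a b : IFV) : ℝ := L (1 - a.mu) (1 - b.mu) + L a.nu b.nu

/-- The normalized Jensen–Shannon IF divergence `JS(α,β) = √(Z(α,β)/2)`. -/
noncomputable def JS (a b : IFV) : ℝ := Real.sqrt (Z a b / 2)

/-- Atanassov's order: `α ⊂ β` iff `μ_α ≤ μ_β` and `ν_α ≥ ν_β`. -/
def IFV.sub (a b : IFV) : Prop := a.mu ≤ b.mu ∧ b.nu ≤ a.nu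

/-- Strict Atanassov order: `α ⊊ β` iff `α ⊂ β` and `α ≠ β`. -/
def IFV.ssub (a b : IFV) : Prop := a.sub b ∧ a ≠ b

/-- The IFV `⟨1, 0⟩`. -/
def IFV.posOne : IFV := ⟨1, 0, by norm_num, le_rfl, by norm_num⟩

/-- The IFV `⟨0, 1⟩`. -/
def IFV.negOne : IFV := ⟨0, 1, le_rfl, by norm_num, by norm_num⟩

section JensenGap

variable {E : Type*} [AddCommGroup E] [Module ℝ E]

/-- The Jensen gap `f p + f q - 2 f ((p + q) / 2)` of a function at the midpoint of two vectors;
it is left unhalved, which is the normalization of `L`. -/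
noncomputable def jensenGap (f : E → ℝ) (p q : E) : ℝ :=
  f p + f q - 2 * f (midpoint ℝ p q)

theorem jensenGap_self (f : E → ℝ) (p : E) : jensenGap f p p = 0 := by
  rw [jensenGap, midpoint_self]
  ring

theorem add_two_mul_lt_of_strictConvexOn {f : E → ℝ} {s : Set E} {x y : E} {c : ℝ}
    (hf : StrictConvexOn ℝ s f) (hx : x ∈ s) (hy : y ∈ s) (hxy : x ≠ y)
    (hc : 0 < c) (hc' : c ≤ 1 / 2) :
    f ((1 - 2 * c) • x + (2 * c) • y) + 2 * f (c • x + (1 - c) • y) < f x + 2 * f y := by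
  have hfar : f ((1 - 2 * c) • x + (2 * c) • y) ≤ (1 - 2 * c) * f x + 2 * c * f y :=
    hf.convexOn.2 hx hy (by linarith) (by linarith) (by ring)
  have hnear : f (c • x + (1 - c) • y) < c * f x + (1 - c) * f y :=
    hf.2 hx hy hxy hc (by linarith) (by ring)
  linarith

theorem exists_combo_midpoint_of_mem_segment {p q r : E} (hq : q ∈ segment ℝ p r) (hqr : q ≠ r) :
    ∃ c : ℝ, 0 < c ∧ c ≤ 1 / 2 ∧ (1 - 2 * c) • r + (2 * c) • midpoint ℝ p q = q ∧
      c • r + (1 - c) • midpoint ℝ p q = midpoint ℝ p r := by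
  obtain ⟨u, t, hu, ht, hut, rfl⟩ := hq
  obtain rfl : t = 1 - u := by linarith
  have hu_pos : 0 < u := by
    refine hu.lt_of_ne ?_
    rintro rfl
    exact hqr (by module)
  refine ⟨u / (1 + u), by positivity, ?_, ?_, ?_⟩
  · rw [div_le_div_iff₀ (by positivity) two_pos]
    linarith
  · rw [midpoint_eq_smul_add, invOf_eq_inv]
    match_scalars <;> field_simp
    ring
  · rw [midpoint_eq_smul_add, midpoint_eq_smul_add, invOf_eq_inv]
    match_scalars <;> field_simp <;> ring

theorem jensenGap_lt_jensenGap_of_mem_segment {f : E → ℝ} {s : Set E} {p q r : E}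
    (hf : StrictConvexOn ℝ s f) (hp : p ∈ s) (hr : r ∈ s)
    (hq : q ∈ segment ℝ p r) (hqr : q ≠ r) : jensenGap f p q < jensenGap f p r := by
  have hm : midpoint ℝ p q ∈ s := hf.1.midpoint_mem hp (hf.1.segment_subset hp hr hq)
  obtain ⟨c, hc, hc', hq_combo, hmid_combo⟩ := exists_combo_midpoint_of_mem_segment hq hqr
  have hrm : r ≠ midpoint ℝ p q := by
    intro h
    rw [← h, ← add_smul, sub_add_cancel, one_smul] at hq_combo
    exact hqr hq_combo.symm
  have hlt := add_two_mul_lt_of_strictConvexOn hf hr hm hrm hc hc'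
  rw [hq_combo, hmid_combo] at hlt
  unfold jensenGap
  linarith

end JensenGap

theorem mul_logb_two_mul_div {b x s : ℝ} (h : s = 0 → x = 0) :
    x * Real.logb b (2 * x / s) = x * Real.logb b x - x * Real.logb b (s / 2) := by
  rcases eq_or_ne x 0 with rfl | hx
  · simp only [zero_mul, sub_zero]
  · have hs : s ≠ 0 := mt h hx
    rw [← mul_sub, ← Real.logb_div hx (div_ne_zero hs two_ne_zero)]
    congr 2
    field_simp

theorem L_eq_jensenGap_div {p q : ℝ} (hp : 0 ≤ p) (hq : 0 ≤ q) :
    L p q = jensenGap (fun x => x * Real.log x) p q / Real.log 2 := by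
  rw [L, mul_logb_two_mul_div (fun h => by linarith), mul_logb_two_mul_div (fun h => by linarith),
    jensenGap, midpoint_eq_smul_add, invOf_eq_inv, smul_eq_mul, inv_mul_eq_div]
  unfold Real.logb
  ring

theorem L_comm (p q : ℝ) : L p q = L q p := by
  rw [L, L, add_comm q p, add_comm]

theorem L_lt_L_of_mem_uIcc {p q r : ℝ} (hp : 0 ≤ p) (hr : 0 ≤ r) (hq : q ∈ Set.uIcc p r)
    (hqr : q ≠ r) : L p q < L p r := by
  have hq_nonneg : 0 ≤ q := (le_min hp hr).trans hq.1
  rw [L_eq_jensenGap_div hp hq_nonneg, L_eq_jensenGap_div hp hr]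
  rw [← segment_eq_uIcc] at hq
  exact div_lt_div_of_pos_right
    (jensenGap_lt_jensenGap_of_mem_segment Real.strictConvexOn_mul_log hp hr hq hqr)
    (Real.log_pos one_lt_two)

theorem L_le_L_of_mem_uIcc {p q r : ℝ} (hp : 0 ≤ p) (hr : 0 ≤ r) (hq : q ∈ Set.uIcc p r) :
    L p q ≤ L p r := by
  rcases eq_or_ne q r with rfl | hqr
  · exact le_rfl
  · exact (L_lt_L_of_mem_uIcc hp hr hq hqr).le

theorem L_nonneg {p q : ℝ} (hp : 0 ≤ p) (hq : 0 ≤ q) : 0 ≤ L p q := by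
  calc 0 = L p p := by rw [L_eq_jensenGap_div hp hp, jensenGap_self, zero_div]
    _ ≤ L p q := L_le_L_of_mem_uIcc hp hq Set.left_mem_uIcc

namespace IFV

/-- `Between a b c` says that `b` lies coordinatewise between `a` and `c`, in either direction.
Unlike `IFV.sub` it is invariant under reversing a chain. -/
def Between (a b c : IFV) : Prop :=
  b.mu ∈ Set.uIcc a.mu c.mu ∧ b.nu ∈ Set.uIcc a.nu c.nu

theorem Between.symm {a b c : IFV} (h : Between a b c) : Between c b a :=
  ⟨Set.uIcc_comm a.mu c.mu ▸ h.1, Set.uIcc_comm a.nu c.nu ▸ h.2⟩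

theorem Between.of_sub {a b c : IFV} (hab : a.sub b) (hbc : b.sub c) : Between a b c :=
  ⟨Set.mem_uIcc_of_le hab.1 hbc.1, Set.mem_uIcc_of_ge hbc.2 hab.2⟩

theorem Between.one_sub_mu_mem_uIcc {a b c : IFV} (h : Between a b c) :
    1 - b.mu ∈ Set.uIcc (1 - a.mu) (1 - c.mu) :=
  Set.image_const_sub_uIcc 1 a.mu c.mu ▸ Set.mem_image_of_mem _ h.1

theorem one_sub_mu_nonneg (a : IFV) : 0 ≤ 1 - a.mu := by
  linarith [a.nu_nonneg, a.sum_le]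

end IFV

theorem Z_comm (a b : IFV) : Z a b = Z b a := by
  rw [Z, Z, L_comm, L_comm a.nu]

theorem Z_nonneg (a b : IFV) : 0 ≤ Z a b :=
  add_nonneg (L_nonneg a.one_sub_mu_nonneg b.one_sub_mu_nonneg) (L_nonneg a.nu_nonneg b.nu_nonneg)

theorem Z_lt_Z_of_between {a b c : IFV} (h : IFV.Between a b c) (hbc : b ≠ c) :
    Z a b < Z a c := by
  have hmu := L_le_L_of_mem_uIcc a.one_sub_mu_nonneg c.one_sub_mu_nonneg h.one_sub_mu_mem_uIcc
  have hnu := L_le_L_of_mem_uIcc a.nu_nonneg c.nu_nonneg h.2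
  rw [Ne, IFV.ext_iff, not_and_or] at hbc
  rcases hbc with hmu_ne | hnu_ne
  · exact add_lt_add_of_lt_of_le (L_lt_L_of_mem_uIcc a.one_sub_mu_nonneg c.one_sub_mu_nonneg
      h.one_sub_mu_mem_uIcc (mt sub_right_inj.1 hmu_ne)) hnu
  · exact add_lt_add_of_le_of_lt hmu (L_lt_L_of_mem_uIcc a.nu_nonneg c.nu_nonneg h.2 hnu_ne)

theorem JS_comm (a b : IFV) : JS a b = JS b a := by
  rw [JS, JS, Z_comm]

theorem JS_lt_JS_of_between {a b c : IFV} (h : IFV.Between a b c) (hbc : b ≠ c) :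
    JS a b < JS a c :=
  Real.sqrt_lt_sqrt (div_nonneg (Z_nonneg a b) zero_le_two)
    (div_lt_div_of_pos_right (Z_lt_Z_of_between h hbc) two_pos)

theorem JS_le_JS_of_between {a b c : IFV} (h : IFV.Between a b c) : JS a b ≤ JS a c := by
  rcases eq_or_ne b c with rfl | hbc
  · exact le_rfl
  · exact (JS_lt_JS_of_between h hbc).le

section WeightedDistance

variable {ι : Type*} [Fintype ι] {w : ι → ℝ} {A B C : ι → IFV}

/-- The weighted distance `d_Wu` between two families of intuitionistic fuzzy values, for weights
that need not be normalized. -/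
noncomputable def dWu (w : ι → ℝ) (A B : ι → IFV) : ℝ := ∑ j, w j * JS (A j) (B j)

theorem dWu_comm (w : ι → ℝ) (A B : ι → IFV) : dWu w A B = dWu w B A := by
  simp only [dWu, JS_comm]

theorem dWu_lt_dWu_of_between (hw : ∀ j, 0 ≤ w j) (h : ∀ j, IFV.Between (A j) (B j) (C j))
    (hBC : ∃ j, 0 < w j ∧ B j ≠ C j) : dWu w A B < dWu w A C := by
  obtain ⟨i, hwi, hi⟩ := hBC
  exact Finset.sum_lt_sum
    (fun j _ => mul_le_mul_of_nonneg_left (JS_le_JS_of_between (h j)) (hw j))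
    ⟨i, Finset.mem_univ i, mul_lt_mul_of_pos_left (JS_lt_JS_of_between (h i) hi) hwi⟩

theorem dWu_strictMono_of_sub_chain_general (hw : ∀ j, 0 ≤ w j)
    (h : ∀ j, IFV.Between (A j) (B j) (C j)) (hAB : ∃ j, 0 < w j ∧ A j ≠ B j)
    (hBC : ∃ j, 0 < w j ∧ B j ≠ C j) : dWu w A B < dWu w A C ∧ dWu w B C < dWu w A C := by
  refine ⟨dWu_lt_dWu_of_between hw h hBC, ?_⟩
  rw [dWu_comm w B C, dWu_comm w A C]
  exact dWu_lt_dWu_of_between hw (fun j => (h j).symm)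
    (hAB.imp fun _ hj => ⟨hj.1, hj.2.symm⟩)

end WeightedDistance

theorem dWu_strictMono_of_sub_chain (n : ℕ) (w : Fin n → ℝ)
    (hw : ∀ j, 0 < w j ∧ w j ≤ 1) (hsum : ∑ j, w j = 1)
    (A B C : Fin n → IFV)
    (hAB : ∀ j, (A j).sub (B j)) (hBC : ∀ j, (B j).sub (C j))
    (hne1 : A ≠ B) (hne2 : B ≠ C) :
    ∑ j, w j * JS (A j) (B j) < ∑ j, w j * JS (A j) (C j) ∧
    ∑ j, w j * JS (B j) (C j) < ∑ j, w j * JS (A j) (C j) :=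
  dWu_strictMono_of_sub_chain_general (fun j => (hw j).1.le)
    (fun j => IFV.Between.of_sub (hAB j) (hBC j))
    ((Function.ne_iff.1 hne1).imp fun j hj => ⟨(hw j).1, hj⟩)
    ((Function.ne_iff.1 hne2).imp fun j hj => ⟨(hw j).1, hj⟩)
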